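/- arXiv:1907.05335 — 3 statements merged into one kernel-verified Lean document; each statement's English description precedes it below -/
import Mathlib

section
/- Suppose i > j and let d = gcd(i,j). Then in R(A;i,j) one has x^{((i+j)/d − 1)(i−j)} = Σ_{k=1}^{(i+j)/d − 1} (−1)^{k+1}·x^{((i+j)/d − 1 − k)(i−j)}. -/
/-- The defining relations for `R(A;i,j)`: `x^i*y + y*x^j = 1` and `y^2 = 0`,
where `x` and `y` are the two generators of the free algebra. -/
inductive MatRel (A : Type*) [CommRing A] (i j : ℕ) :
    FreeAlgebra A (Fin 2) → FreeAlgebra A (Fin 2) → Prop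
  | rel1 : MatRel A i j
      (FreeAlgebra.ι A (0 : Fin 2) ^ i * FreeAlgebra.ι A (1 : Fin 2) +
        FreeAlgebra.ι A (1 : Fin 2) * FreeAlgebra.ι A (0 : Fin 2) ^ j) 1
  | rel2 : MatRel A i j (FreeAlgebra.ι A (1 : Fin 2) ^ 2) 0

/-- `R(A;i,j)`, the quotient of the free `A`-algebra on `x, y` by the two-sided ideal
generated by `x^i*y + y*x^j - 1` and `y^2`. -/
abbrev MatRing (A : Type*) [CommRing A] (i j : ℕ) : Type _ := RingQuot (MatRel A i j)

/-- The image of the generator `x` in `R(A;i,j)`. -/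
noncomputable def Xgen (A : Type*) [CommRing A] (i j : ℕ) : MatRing A i j :=
  RingQuot.mkAlgHom A (MatRel A i j) (FreeAlgebra.ι A (0 : Fin 2))

/-- The image of the generator `y` in `R(A;i,j)`. -/
noncomputable def Ygen (A : Type*) [CommRing A] (i j : ℕ) : MatRing A i j :=
  RingQuot.mkAlgHom A (MatRel A i j) (FreeAlgebra.ι A (1 : Fin 2))

/-!
Write `p = x ^ i`, `q = x ^ j`. The relation `p * y + y * q = 1` with `y ^ 2 = 0` is symmetric
in the commuting elements `p` and `q`: the defect `c = q * y + y * p - 1` is annihilated by `y` on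
both sides, so `c = y * q * c * p * y`, which expands to `0`. Therefore `p - q` and
`p * q = x ^ (i + j)` commute with `y`, and `g = ⁅p, y⁆` is an involution with `g * p = -q * g`.
Hence, for all `n`, `⁅p ^ n, y⁆ = (∑ l < n, p ^ l * (-q) ^ (n - 1 - l)) * g`.
For `n = (i + j) / d` the power `p ^ n` is a power of `x ^ (i + j)`, so the left-hand side vanishes,
and so does the sum. The factor `q ^ (n - 1)` can be cancelled from it because `x` is left regular:
if `x * f = 0`, then `f = p * y * f = q * y * f`, whence `f = x ^ (i - j) * f = 0`.
-/

section GeomSum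

variable {R : Type*} [Ring R]

lemma lie_pow_eq_geom_sum₂_mul {p p' y : R} (h : SemiconjBy ⁅p, y⁆ p p') (n : ℕ) :
    ⁅p ^ n, y⁆ = (∑ l ∈ Finset.range n, p ^ l * p' ^ (n - 1 - l)) * ⁅p, y⁆ := by
  induction n with
  | zero => simp [Ring.lie_def]
  | succ n ih =>
    have hsum : ∑ l ∈ Finset.range (n + 1), p ^ l * p' ^ (n + 1 - 1 - l)
        = p * (∑ l ∈ Finset.range n, p ^ l * p' ^ (n - 1 - l)) + p' ^ n := by
      simp [Finset.sum_range_succ', Finset.mul_sum, pow_succ', mul_assoc, Nat.sub_sub, add_comm 1]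
    calc ⁅p ^ (n + 1), y⁆ = p * ⁅p ^ n, y⁆ + ⁅p, y⁆ * p ^ n := by
          simp only [Ring.lie_def, pow_succ']; noncomm_ring
      _ = p * ⁅p ^ n, y⁆ + p' ^ n * ⁅p, y⁆ := by rw [(h.pow_right n).eq]
      _ = _ := by rw [ih, hsum, add_mul, mul_assoc]

lemma geom_sum₂_mul_left {S : Type*} [Semiring S] {a b c : S} (hca : Commute c a)
    (hcb : Commute c b) (n : ℕ) :
    ∑ l ∈ Finset.range n, (c * a) ^ l * (c * b) ^ (n - 1 - l)
      = c ^ (n - 1) * ∑ l ∈ Finset.range n, a ^ l * b ^ (n - 1 - l) := by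
  rw [Finset.mul_sum]
  refine Finset.sum_congr rfl fun l hl => ?_
  have hln : l + (n - 1 - l) = n - 1 := by have := Finset.mem_range.1 hl; omega
  rw [hca.mul_pow, hcb.mul_pow, (hca.symm.pow_pow _ _).mul_mul_mul_comm, ← pow_add, hln]

lemma pow_eq_sum_of_geom_sum₂_neg_one_eq_zero {t : R} {n : ℕ}
    (h : ∑ l ∈ Finset.range (n + 1), t ^ l * (-1) ^ (n - l) = 0) :
    t ^ n = ∑ k ∈ Finset.Icc 1 n, (-1) ^ (k + 1) * t ^ (n - k) := by
  have hreflect : ∑ k ∈ Finset.range (n + 1), (-1) ^ k * t ^ (n - k) = 0 := by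
    rw [← h, ← Finset.sum_range_reflect]
    refine Finset.sum_congr rfl fun l hl => ?_
    have hln : n - (n - l) = l := Nat.sub_sub_self (Finset.mem_range_succ_iff.1 hl)
    rw [Nat.add_sub_cancel, hln, ((Commute.neg_one_left t).pow_pow _ _).eq]
  rw [Finset.range_eq_Ico, Finset.sum_eq_sum_Ico_succ_bot n.succ_pos] at hreflect
  simp only [pow_zero, one_mul, Nat.sub_zero, zero_add] at hreflect
  rw [eq_neg_of_add_eq_zero_left hreflect, ← Finset.sum_neg_distrib]
  exact Finset.sum_congr rfl fun k _ => by rw [pow_succ, mul_neg_one, neg_mul]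

end GeomSum

/-- The relations `y ^ 2 = 0` and `p * y + y * q = 1`. They make `p * y` and `y * q`
complementary idempotents, by which a ring is recognised as a ring of `2 × 2` matrices; here
`p = x ^ i` and `q = x ^ j`. Commutativity of `p` and `q` is not part of the notion. -/
structure IsMatrixTriple {R : Type*} [Ring R] (p q y : R) : Prop where
  sq_eq_zero : y ^ 2 = 0
  mul_add_mul_eq_one : p * y + y * q = 1

namespace IsMatrixTriple

variable {R : Type*} [Ring R] {p q y : R}

lemma mul_left_mul (h : IsMatrixTriple p q y) : y * p * y = y := by
  linear_combination (norm := noncomm_ring) y * h.mul_add_mul_eq_one - h.sq_eq_zero * q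

lemma mul_right_mul (h : IsMatrixTriple p q y) : y * q * y = y := by
  linear_combination (norm := noncomm_ring) h.mul_add_mul_eq_one * y - p * h.sq_eq_zero

lemma symm (h : IsMatrixTriple p q y) (hpq : Commute p q) : IsMatrixTriple q p y where
  sq_eq_zero := h.sq_eq_zero
  mul_add_mul_eq_one := by
    have hy := h.sq_eq_zero
    have hrel := h.mul_add_mul_eq_one
    have hp := h.mul_left_mul
    have hq := h.mul_right_mul
    have hqp : y * q * p * y = 0 := by
      linear_combination (norm := noncomm_ring) y * q * hrel - hq * q
    have hpp_qq : y * p * p * y + y * q * q * y = 0 := by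
      linear_combination (norm := noncomm_ring)
        hqp + y * hpq.eq * y - y * p * p * hq - hp * q * q * y + y * p * hrel * q * y
    set c := q * y + y * p - 1 with hc
    have hyc : y * c = 0 := by
      rw [hc]; linear_combination (norm := noncomm_ring) hq + hy * p
    have hcy : c * y = 0 := by
      rw [hc]; linear_combination (norm := noncomm_ring) hp + q * hy
    have hleft : c = y * q * c := by
      linear_combination (norm := noncomm_ring) p * hyc - hrel * c
    have hright : c = c * p * y := by
      linear_combination (norm := noncomm_ring) hcy * q - c * hrel
    have hcorner : c = y * (q * c * p) * y := by
      linear_combination (norm := noncomm_ring) hleft + y * q * hright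
    have hzero : y * (q * c * p) * y = 0 := by
      rw [hc]
      linear_combination (norm := noncomm_ring) hpp_qq + y * q * q * hp + hq * p * p * y - hqp
    exact sub_eq_zero.1 (hcorner.trans hzero)

lemma commute_sub (h : IsMatrixTriple p q y) (hpq : Commute p q) : Commute (p - q) y := by
  rw [commute_iff_eq]
  linear_combination (norm := noncomm_ring)
    h.mul_add_mul_eq_one - (h.symm hpq).mul_add_mul_eq_one

lemma commute_mul (h : IsMatrixTriple p q y) (hpq : Commute p q) : Commute (p * q) y := by
  rw [commute_iff_eq]
  linear_combination (norm := noncomm_ring)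
    p * (h.symm hpq).mul_add_mul_eq_one - h.mul_add_mul_eq_one * p - y * hpq.eq

lemma lie_mul_lie_self (h : IsMatrixTriple p q y) : ⁅p, y⁆ * ⁅p, y⁆ = 1 := by
  rw [Ring.lie_def]
  linear_combination (norm := noncomm_ring)
    h.mul_add_mul_eq_one + p * h.mul_left_mul - p * h.sq_eq_zero * p
      - y * p * h.mul_add_mul_eq_one + h.mul_left_mul * q + h.mul_left_mul * p

lemma semiconjBy_lie (h : IsMatrixTriple p q y) (hpq : Commute p q) :
    SemiconjBy ⁅p, y⁆ p (-q) := by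
  rw [SemiconjBy, Ring.lie_def]
  linear_combination (norm := noncomm_ring)
    (h.commute_mul hpq).eq - hpq.eq * y + (h.commute_sub hpq).eq * p + y * hpq.eq

lemma geom_sum₂_neg_eq_zero (h : IsMatrixTriple p q y) (hpq : Commute p q) {n : ℕ}
    (hn : Commute (p ^ n) y) :
    ∑ l ∈ Finset.range n, p ^ l * (-q) ^ (n - 1 - l) = 0 := by
  have hlie : (∑ l ∈ Finset.range n, p ^ l * (-q) ^ (n - 1 - l)) * ⁅p, y⁆ = 0 := by
    rw [← lie_pow_eq_geom_sum₂_mul (h.semiconjBy_lie hpq), Ring.lie_def, hn.eq, sub_self]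
  rw [← mul_one (∑ l ∈ _, _), ← h.lie_mul_lie_self, ← mul_assoc, hlie, zero_mul]

lemma isLeftRegular_of_pow {x : R} {i j : ℕ} (h : IsMatrixTriple (x ^ i) (x ^ j) y)
    (hj : 1 ≤ j) (hij : j < i) : IsLeftRegular x := by
  refine isLeftRegular_of_non_zero_divisor x fun f hf => ?_
  have hpow : ∀ {k : ℕ}, 1 ≤ k → x ^ k * f = 0 := fun {k} hk => by
    rw [← Nat.sub_add_cancel hk, pow_succ, mul_assoc, hf, mul_zero]
  have hp : x ^ i * y * f = f := by
    linear_combination (norm := noncomm_ring) h.mul_add_mul_eq_one * f - y * hpow hj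
  have hq : x ^ j * y * f = f := by
    linear_combination (norm := noncomm_ring) hp - (h.commute_sub (.pow_pow_self x i j)).eq * f
      - y * hpow (hj.trans hij.le) + y * hpow hj
  calc f = x ^ (i - j) * (x ^ j * y * f) := by
        rw [← mul_assoc, ← mul_assoc, ← pow_add, Nat.sub_add_cancel hij.le, hp]
    _ = 0 := by rw [hq, hpow (Nat.sub_pos_of_lt hij)]

end IsMatrixTriple

theorem stmt5_general {R : Type*} [Ring R] {x y : R} {i j d : ℕ} (hj : 1 ≤ j) (hij : j < i)
    (hdi : d ∣ i) (hdj : d ∣ j) (hy : y ^ 2 = 0) (hrel : x ^ i * y + y * x ^ j = 1) :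
    x ^ (((i + j) / d - 1) * (i - j))
      = ∑ k ∈ Finset.Icc 1 ((i + j) / d - 1),
          (-1) ^ (k + 1) * x ^ (((i + j) / d - 1 - k) * (i - j)) := by
  have h : IsMatrixTriple (x ^ i) (x ^ j) y := ⟨hy, hrel⟩
  have hpq : Commute (x ^ i) (x ^ j) := .pow_pow_self x i j
  have hp : x ^ i = x ^ j * x ^ (i - j) := by rw [← pow_add, Nat.add_sub_cancel' hij.le]
  have hcentral : Commute ((x ^ i) ^ ((i + j) / d)) y := by
    have hexp : i * ((i + j) / d) = (i + j) * (i / d) := by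
      rw [← Nat.mul_div_assoc _ (hdi.add hdj), ← Nat.mul_div_assoc _ hdi, mul_comm]
    rw [← pow_mul, hexp, pow_mul, pow_add]
    exact (h.commute_mul hpq).pow_left _
  obtain ⟨n, hn⟩ : ∃ n, (i + j) / d = n + 1 := Nat.exists_eq_succ_of_ne_zero <|
    (Nat.div_pos (Nat.le_of_dvd (by omega) (hdi.add hdj)) (Nat.pos_of_dvd_of_pos hdj hj)).ne'
  have hsum := h.geom_sum₂_neg_eq_zero hpq hcentral
  rw [hn, ← mul_neg_one (x ^ j), hp, geom_sum₂_mul_left (.pow_pow_self x j (i - j))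
    (Commute.neg_one_right _)] at hsum
  have hcancel := ((h.isLeftRegular_of_pow hj hij).pow j).pow n (hsum.trans (mul_zero _).symm)
  simpa only [hn, Nat.add_sub_cancel, ← pow_mul, mul_comm (i - j)] using
    pow_eq_sum_of_geom_sum₂_neg_one_eq_zero hcancel

lemma Ygen_sq (A : Type*) [CommRing A] (i j : ℕ) : Ygen A i j ^ 2 = 0 := by
  simpa only [map_pow, map_zero, Ygen] using
    RingQuot.mkAlgHom_rel A (MatRel.rel2 (A := A) (i := i) (j := j))

lemma Xgen_pow_mul_Ygen_add_Ygen_mul_Xgen_pow (A : Type*) [CommRing A] (i j : ℕ) :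
    Xgen A i j ^ i * Ygen A i j + Ygen A i j * Xgen A i j ^ j = 1 := by
  simpa only [map_add, map_mul, map_pow, map_one, Xgen, Ygen] using
    RingQuot.mkAlgHom_rel A (MatRel.rel1 (A := A) (i := i) (j := j))

theorem stmt5 (A : Type*) [CommRing A] (i j : ℕ) (hi : 1 ≤ i) (hj : 1 ≤ j)
    (hij : i > j) (d : ℕ) (hd : d = Nat.gcd i j) :
    Xgen A i j ^ (((i + j) / d - 1) * (i - j))
      = ∑ k ∈ Finset.Icc 1 ((i + j) / d - 1),
          (-1 : MatRing A i j) ^ (k + 1) * Xgen A i j ^ (((i + j) / d - 1 - k) * (i - j)) := by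
  subst hd
  exact stmt5_general hj hij (Nat.gcd_dvd_left i j) (Nat.gcd_dvd_right i j) (Ygen_sq A i j)
    (Xgen_pow_mul_Ygen_add_Ygen_mul_Xgen_pow A i j)
end

section
/- If i > j and gcd(i,j) = 1, then R(A;i,j) is generated as an A-module by the set {x^m : 0 ≤ m < (i+j−1)(i−j)} ∪ {x^m·y : 0 ≤ m < (i+j−1)(i−j)}; in particular R(A;i,j) is a finitely generated A-module, with a generating set of cardinality at most 2(i+j−1)(i−j). -/
/-!
Put `d = i - j`, `n = i + j`. As `x ^ i` and `x ^ j` commute, the relation can be swapped to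
`x ^ j * y + y * x ^ i = 1`. Three things follow.

* `x` is left regular: if `x * e = 0` then `e = x ^ i * y * e` and, after the swap,
  `e = x ^ j * y * e`, so `e = x ^ d * e = 0`.
* `x ^ n` commutes with `y`. Moving `y` through `x ^ (j * n)` one factor `x ^ j` at a time
  therefore gives `G = (x ^ (j * n) - (-x ^ i) ^ n) * y`, where `G` is the geometric sum in
  `-x ^ i` and `x ^ j`. The difference of powers is a left multiple of `G`, so `y ^ 2 = 0` forces
  `G = 0`. Cancelling a power of `x` leaves `∑ l < n, (-x ^ d) ^ l = 0`, a relation of degree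
  `(n - 1) * d` in `x`, and hence `x ^ (2 * d * n) = 1`.
* The left `A[x]`-module `A[x] + A[x] * y` contains every `y * x ^ (s * j + t * n)`. Since `j`
  and `n` are coprime these exponents include all large integers, and as `x` has finite order
  every `y * x ^ m` is obtained. So `A[x] + A[x] * y` is closed under left multiplication by `y`.
-/

open Finset Submodule

section Relations

variable {R : Type*} [Ring R]

theorem mul_add_mul_swap_eq_one {a b y : R} (hab : Commute a b) (h : b * y + y * a = 1)
    (hy : y * y = 0) : a * y + y * b = 1 := by
  have hyay : y * a * y = y := by simpa [add_mul, mul_assoc, hy] using congrArg (· * y) h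
  have hyby : y * b * y = y := by simpa [mul_add, ← mul_assoc, hy] using congrArg (y * ·) h
  have hyaby : y * a * b * y = 0 := by
    rw [eq_sub_of_add_eq' h, sub_mul, sub_mul, one_mul, mul_assoc b, mul_assoc b, hyby, sub_self]
  obtain ⟨D, hD⟩ : ∃ D, D = a * y + y * b - 1 := ⟨_, rfl⟩
  have hyD : y * D = 0 := by
    rw [hD, mul_sub, mul_add, ← mul_assoc, ← mul_assoc, hyay, hy, zero_mul, add_zero, mul_one,
      sub_self]
  have hyaD : y * a * D = D := by
    rw [eq_sub_of_add_eq' h, sub_mul, one_mul, mul_assoc, hyD, mul_zero, sub_zero]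
  have hD0 : D = 0 :=
    calc D = y * b * y * a * D := by rw [hyby, hyaD]
      _ = y * b * (y * a * D) := by simp only [mul_assoc]
      _ = y * (b * a) * y + (y * b * y * b - y * b) := by rw [hyaD, hD]; noncomm_ring
      _ = 0 := by rw [hyby, sub_self, add_zero, ← hab.eq, ← mul_assoc, hyaby]
  exact sub_eq_zero.mp (hD.symm.trans hD0)

theorem commute_mul_of_mul_add_mul_eq_one {a b y : R} (hab : Commute a b)
    (h : b * y + y * a = 1) (hy : y * y = 0) : Commute (a * b) y :=
  calc a * b * y = a * (b * y + y * a) - a * y * a := by noncomm_ring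
    _ = (a * y + y * b) * a - a * y * a := by
      rw [h, mul_add_mul_swap_eq_one hab h hy, mul_one, one_mul]
    _ = y * (b * a) := by noncomm_ring
    _ = y * (a * b) := by rw [hab.eq]

theorem commute_pow_add_of_mul_add_mul_eq_one {x y : R} {i j : ℕ}
    (h : x ^ i * y + y * x ^ j = 1) (hy : y * y = 0) : Commute (x ^ (i + j)) y := by
  rw [add_comm, pow_add]
  exact commute_mul_of_mul_add_mul_eq_one (Commute.pow_pow_self x j i) h hy

theorem isLeftRegular_of_mul_add_mul_eq_one {x y : R} {j d : ℕ} (hj : j ≠ 0) (hd : d ≠ 0)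
    (h : x ^ (j + d) * y + y * x ^ j = 1) (hy : y * y = 0) : IsLeftRegular x := by
  refine isLeftRegular_iff_right_eq_zero_of_mul.mpr fun e he => ?_
  have hpow {m : ℕ} (hm : m ≠ 0) : x ^ m * e = 0 := by
    rw [← Nat.succ_pred_eq_of_ne_zero hm, pow_succ, mul_assoc, he, mul_zero]
  have hswap : x ^ j * y + y * x ^ (j + d) = 1 :=
    mul_add_mul_swap_eq_one (Commute.pow_pow_self x j (j + d)) h hy
  calc e = (x ^ (j + d) * y + y * x ^ j) * e := by rw [h, one_mul]
    _ = x ^ d * (x ^ j * y * e) := by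
      rw [add_mul, mul_assoc y, hpow hj, mul_zero, add_zero, add_comm j d, pow_add]
      simp only [mul_assoc]
    _ = x ^ d * ((x ^ j * y + y * x ^ (j + d)) * e) := by
      rw [add_mul, mul_assoc y, hpow (by lia), mul_zero, add_zero]
    _ = 0 := by rw [hswap, one_mul, hpow hd]

theorem mul_pow_eq_geom_sum₂_add {a u y : R} (h : y * a = 1 + u * y) (n : ℕ) :
    y * a ^ n = ∑ l ∈ range n, u ^ l * a ^ (n - 1 - l) + u ^ n * y := by
  induction n with
  | zero => simp
  | succ n ih =>
    have hsum : ∑ l ∈ range (n + 1), u ^ l * a ^ (n - l) =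
        u * ∑ l ∈ range n, u ^ l * a ^ (n - 1 - l) + a ^ n := by
      simp [sum_range_succ', mul_sum, pow_succ', mul_assoc, Nat.sub_sub, add_comm]
    calc y * a ^ (n + 1) = a ^ n + u * (y * a ^ n) := by
          rw [pow_succ', ← mul_assoc, h, add_mul, one_mul, mul_assoc]
      _ = _ := by rw [ih, mul_add, ← mul_assoc, ← pow_succ', Nat.add_sub_cancel, hsum]; abel

theorem geom_sum₂_eq_zero_of_commute_pow {a u y : R} {n : ℕ} (hua : Commute u a)
    (h : y * a = 1 + u * y) (hy : y * y = 0) (hc : Commute (a ^ n) y) :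
    ∑ l ∈ range n, u ^ l * a ^ (n - 1 - l) = 0 := by
  obtain ⟨G, hG⟩ : ∃ G, G = ∑ l ∈ range n, u ^ l * a ^ (n - 1 - l) := ⟨_, rfl⟩
  have hfactor : (a - u) * G = a ^ n - u ^ n := by rw [hG, hua.mul_neg_geom_sum₂]
  have hGy : G = (a - u) * G * y := by
    rw [hfactor, sub_mul, hc.eq, mul_pow_eq_geom_sum₂_add h n, ← hG, add_sub_cancel_right]
  have hGy0 : G * y = 0 := by rw [hGy, mul_assoc, hy, mul_zero]
  rw [← hG, hGy, mul_assoc, hGy0, mul_zero]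

theorem geom_sum_neg_pow_eq_zero {x y : R} {j d : ℕ} (hj : j ≠ 0) (hd : d ≠ 0)
    (h : x ^ (j + d) * y + y * x ^ j = 1) (hy : y * y = 0) :
    ∑ l ∈ range (j + d + j), (-x ^ d) ^ l = 0 := by
  obtain ⟨n, hn⟩ : ∃ n, n = j + d + j := ⟨_, rfl⟩
  have hcomm : Commute ((x ^ j) ^ n) y := by
    rw [hn, pow_right_comm]
    exact (commute_pow_add_of_mul_add_mul_eq_one h hy).pow_left j
  have hG := geom_sum₂_eq_zero_of_commute_pow (Commute.pow_pow_self x (j + d) j).neg_left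
    (by rw [← h]; noncomm_ring) hy hcomm
  have hterm {l : ℕ} (hl : l < n) :
      (-x ^ (j + d)) ^ l * (x ^ j) ^ (n - 1 - l) = x ^ (j * (n - 1)) * (-x ^ d) ^ l := by
    have hxv : Commute (x ^ j) (-x ^ d) := (Commute.pow_pow_self x j d).neg_right
    rw [pow_add, ← mul_neg, hxv.mul_pow, mul_assoc, ← (hxv.pow_pow _ l).eq, ← mul_assoc,
      ← pow_add, ← pow_mul, Nat.add_sub_cancel' (by lia)]
  rw [sum_congr rfl fun l hl => hterm (mem_range.mp hl), ← mul_sum] at hG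
  rw [← hn]
  exact ((isLeftRegular_of_mul_add_mul_eq_one hj hd h hy).pow _).mul_left_eq_zero_iff.mp hG

theorem pow_two_mul_eq_one_of_geom_sum_neg_eq_zero {z : R} {n : ℕ}
    (h : ∑ l ∈ range n, (-z) ^ l = 0) : z ^ (2 * n) = 1 := by
  have hz : (-z) ^ n = 1 := sub_eq_zero.mp (by rw [← mul_geom_sum, h, mul_zero])
  rw [pow_mul, ← neg_sq, ← pow_mul, mul_comm, pow_mul, hz, one_pow]

end Relations

section Span

theorem finite_setOf_exists_lt_eq {α : Type*} (f : ℕ → α) (n : ℕ) :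
    {z | ∃ m < n, z = f m}.Finite :=
  ((Set.finite_lt_nat n).image f).subset fun _ ⟨m, hm, hz⟩ => ⟨m, hm, hz.symm⟩

variable {A R : Type*} [CommRing A] [Ring R] [Algebra A R] {x y : R}

theorem pow_mem_span_of_geom_sum_neg_pow_eq_zero {d n : ℕ} (hd : d ≠ 0) (hn : n ≠ 0)
    (h : ∑ l ∈ range n, (-x ^ d) ^ l = 0) (m : ℕ) :
    x ^ m ∈ span A {z | ∃ l < (n - 1) * d, z = x ^ l} := by
  obtain ⟨k, rfl⟩ := Nat.exists_eq_succ_of_ne_zero hn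
  have hlead : (-x ^ d) ^ k = -∑ l ∈ range k, (-x ^ d) ^ l :=
    eq_neg_of_add_eq_zero_right (by rwa [← sum_range_succ])
  have hpow (t l : ℕ) : x ^ t * (-x ^ d) ^ l = (-1 : A) ^ l • x ^ (t + d * l) := by
    rw [neg_pow, ← pow_mul, Algebra.smul_def, pow_add, ← mul_assoc, ← mul_assoc]
    simp [((Commute.neg_one_right (x ^ t)).pow_right l).eq]
  induction m using Nat.strong_induction_on with
  | _ m ih =>
    rcases lt_or_ge m (k * d) with hm | hm
    · exact subset_span ⟨m, hm, rfl⟩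
    · obtain ⟨t, rfl⟩ := Nat.exists_eq_add_of_le' hm
      have hreduce : (-1 : A) ^ k • x ^ (t + k * d) =
          -∑ l ∈ range k, (-1 : A) ^ l • x ^ (t + d * l) := by
        simp only [← hpow, mul_comm k d, ← mul_sum, hlead, mul_neg]
      refine (smul_mem_iff_of_isUnit _ (isUnit_one.neg.pow k)).mp ?_
      rw [hreduce]
      refine neg_mem (sum_mem fun l hl => smul_mem _ _ (ih _ ?_))
      have := Nat.mul_lt_mul_of_pos_left (mem_range.mp hl) (Nat.pos_of_ne_zero hd)
      lia

variable (A x y) in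
/-- `A[x] + A[x] * y`, the left `A[x]`-submodule of `R` generated by `1` and `y`, given by its
spanning set over `A` since `R` is not an algebra over the polynomial ring. -/
def polySpan : Submodule A R :=
  span A (Set.range (x ^ ·) ∪ Set.range (x ^ · * y))

theorem pow_mem_polySpan (m : ℕ) : x ^ m ∈ polySpan A x y :=
  subset_span (Or.inl ⟨m, rfl⟩)

theorem pow_mul_mem_polySpan (m : ℕ) : x ^ m * y ∈ polySpan A x y :=
  subset_span (Or.inr ⟨m, rfl⟩)

theorem polySpan_le {W : Submodule A R} :
    polySpan A x y ≤ W ↔ (∀ m, x ^ m ∈ W) ∧ ∀ m, x ^ m * y ∈ W := by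
  simp [polySpan, span_le, Set.range_subset_iff]

theorem pow_mul_mem_polySpan_of_mem (m : ℕ) {w : R} (hw : w ∈ polySpan A x y) :
    x ^ m * w ∈ polySpan A x y := by
  have hle : polySpan A x y ≤ (polySpan A x y).comap (LinearMap.mulLeft A (x ^ m)) :=
    polySpan_le.mpr ⟨fun l => by simpa [← pow_add] using pow_mem_polySpan (m + l),
      fun l => by simpa [← pow_add, ← mul_assoc] using pow_mul_mem_polySpan (m + l)⟩
  exact hle hw

theorem mul_mem_polySpan_of_mem (hy : y * y = 0) {w : R} (hw : w ∈ polySpan A x y) :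
    w * y ∈ polySpan A x y := by
  have hle : polySpan A x y ≤ (polySpan A x y).comap (LinearMap.mulRight A y) :=
    polySpan_le.mpr ⟨fun l => by simpa using pow_mul_mem_polySpan l,
      fun l => by simp [mul_assoc, hy]⟩
  exact hle hw

theorem mul_pow_mul_mem_polySpan {i j : ℕ} (h : x ^ i * y + y * x ^ j = 1) (s : ℕ) :
    y * x ^ (s * j) ∈ polySpan A x y := by
  induction s with
  | zero => simpa using pow_mul_mem_polySpan (A := A) (x := x) (y := y) 0
  | succ s ih =>
    have hstep : y * x ^ ((s + 1) * j) = x ^ (s * j) - x ^ i * (y * x ^ (s * j)) := by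
      rw [add_one_mul, add_comm, pow_add, ← mul_assoc, eq_sub_of_add_eq' h, sub_mul, one_mul,
        mul_assoc]
    rw [hstep]
    exact sub_mem (pow_mem_polySpan _) (pow_mul_mem_polySpan_of_mem i ih)

theorem mul_pow_mem_polySpan_of_coprime {i j n N : ℕ} (h : x ^ i * y + y * x ^ j = 1)
    (hjn : j.Coprime n) (hn : Commute (x ^ n) y) (hN : N ≠ 0) (hx : x ^ N = 1) (m : ℕ) :
    y * x ^ m ∈ polySpan A x y := by
  obtain ⟨s, t, hst⟩ : ∃ s t, s * j + t * n = m + N * (j.pred * n.pred) :=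
    Nat.exists_add_mul_eq_of_gcd_dvd_of_mul_pred_le j n _ (by simp [hjn.gcd_eq_one])
      (le_add_left (Nat.le_mul_of_pos_left _ (Nat.pos_of_ne_zero hN)))
  have hxm : x ^ m = x ^ (t * n) * x ^ (s * j) := by
    rw [← pow_add, add_comm, hst, pow_add, pow_mul, hx, one_pow, mul_one]
  have hyt : Commute (x ^ (t * n)) y := by
    rw [mul_comm, pow_mul]
    exact hn.pow_left t
  rw [hxm, ← mul_assoc, ← hyt.eq, mul_assoc]
  exact pow_mul_mem_polySpan_of_mem _ (mul_pow_mul_mem_polySpan h s)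

theorem polySpan_eq_adjoin (hy : y * y = 0) (hyx : ∀ m, y * x ^ m ∈ polySpan A x y) :
    polySpan A x y = (Algebra.adjoin A {x, y}).toSubmodule := by
  have hxmem : x ∈ Algebra.adjoin A {x, y} := Algebra.subset_adjoin (by simp)
  have hymem : y ∈ Algebra.adjoin A {x, y} := Algebra.subset_adjoin (by simp)
  refine le_antisymm (polySpan_le.mpr
    ⟨fun m => Subalgebra.pow_mem _ hxmem m,
      fun m => Subalgebra.mul_mem _ (Subalgebra.pow_mem _ hxmem m) hymem⟩) fun s hs => ?_
  have hyw : polySpan A x y ≤ (polySpan A x y).comap (LinearMap.mulLeft A y) :=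
    polySpan_le.mpr ⟨hyx, fun m => by
      simpa [mul_assoc] using mul_mem_polySpan_of_mem hy (hyx m)⟩
  have hmul : ∀ w ∈ polySpan A x y, s * w ∈ polySpan A x y := by
    induction hs using Algebra.adjoin_induction with
    | mem z hz =>
      rcases hz with rfl | rfl
      · simpa using fun w => pow_mul_mem_polySpan_of_mem (A := A) (x := z) (y := y) 1 (w := w)
      · exact fun w hw => hyw hw
    | algebraMap c =>
      intro w hw
      rw [← Algebra.smul_def]
      exact smul_mem _ c hw
    | add s t _ _ hs ht =>
      intro w hw
      rw [add_mul]
      exact add_mem (hs w hw) (ht w hw)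
    | mul s t _ _ hs ht =>
      intro w hw
      rw [mul_assoc]
      exact hs _ (ht w hw)
  simpa using hmul _ (pow_mem_polySpan 0)

theorem span_pow_union_eq_polySpan {D : ℕ}
    (hD : ∀ m, x ^ m ∈ span A {z | ∃ l < D, z = x ^ l}) :
    span A ({z | ∃ m < D, z = x ^ m} ∪ {z | ∃ m < D, z = x ^ m * y}) = polySpan A x y := by
  have hleft : span A {z | ∃ l < D, z = x ^ l} ≤
      (span A {z | ∃ l < D, z = x ^ l * y}).comap (LinearMap.mulRight A y) := by
    rw [span_le]
    rintro _ ⟨m, hm, rfl⟩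
    exact subset_span ⟨m, hm, rfl⟩
  refine le_antisymm (span_le.mpr ?_) (polySpan_le.mpr ⟨fun m => ?_, fun m => ?_⟩)
  · rintro _ (⟨m, -, rfl⟩ | ⟨m, -, rfl⟩)
    exacts [pow_mem_polySpan m, pow_mul_mem_polySpan m]
  · exact span_mono Set.subset_union_left (hD m)
  · exact span_mono Set.subset_union_right (hleft (hD m))

theorem polySpan_fg {D : ℕ} (hD : ∀ m, x ^ m ∈ span A {z | ∃ l < D, z = x ^ l}) :
    (polySpan A x y).FG := by
  rw [← span_pow_union_eq_polySpan hD]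
  exact fg_span ((finite_setOf_exists_lt_eq _ _).union (finite_setOf_exists_lt_eq _ _))

theorem stmt9_general {i j : ℕ} (hj : 1 ≤ j) (hij : j < i) (hgcd : i.Coprime j)
    (h : x ^ i * y + y * x ^ j = 1) (hy : y * y = 0) :
    span A ({z | ∃ m < (i + j - 1) * (i - j), z = x ^ m} ∪
      {z | ∃ m < (i + j - 1) * (i - j), z = x ^ m * y}) =
        (Algebra.adjoin A {x, y}).toSubmodule ∧
      (Algebra.adjoin A {x, y}).toSubmodule.FG := by
  obtain ⟨d, rfl⟩ := Nat.exists_eq_add_of_le hij.le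
  have hj0 : j ≠ 0 := by lia
  have hd0 : d ≠ 0 := by lia
  have hsum : ∑ l ∈ range (j + d + j), (-x ^ d) ^ l = 0 := geom_sum_neg_pow_eq_zero hj0 hd0 h hy
  have hord : x ^ (d * (2 * (j + d + j))) = 1 := by
    rw [pow_mul, pow_two_mul_eq_one_of_geom_sum_neg_eq_zero hsum]
  have hcop : j.Coprime (j + d + j) := by
    rw [Nat.coprime_add_self_right]
    exact hgcd.symm
  have hspan := pow_mem_span_of_geom_sum_neg_pow_eq_zero (A := A) hd0 (by lia) hsum
  have hadjoin : polySpan A x y = (Algebra.adjoin A {x, y}).toSubmodule :=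
    polySpan_eq_adjoin hy (mul_pow_mem_polySpan_of_coprime h hcop
      (commute_pow_add_of_mul_add_mul_eq_one h hy) (by simp [hj0, hd0]) hord)
  rw [Nat.add_sub_cancel_left, ← hadjoin]
  exact ⟨span_pow_union_eq_polySpan hspan, polySpan_fg hspan⟩

end Span

section MatRing

variable (A : Type*) [CommRing A] (i j : ℕ)

theorem Xgen_pow_mul_Ygen_add :
    Xgen A i j ^ i * Ygen A i j + Ygen A i j * Xgen A i j ^ j = 1 := by
  simpa [Xgen, Ygen] using RingQuot.mkAlgHom_rel A (MatRel.rel1 (A := A) (i := i) (j := j))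

theorem Ygen_mul_self : Ygen A i j * Ygen A i j = 0 := by
  simpa [Ygen, pow_two] using RingQuot.mkAlgHom_rel A (MatRel.rel2 (A := A) (i := i) (j := j))

theorem adjoin_Xgen_Ygen : Algebra.adjoin A {Xgen A i j, Ygen A i j} = ⊤ := by
  have himage : ({Xgen A i j, Ygen A i j} : Set (MatRing A i j)) =
      RingQuot.mkAlgHom A (MatRel A i j) '' Set.range (FreeAlgebra.ι A) := by
    ext z
    simp [Xgen, Ygen, eq_comm]
  rw [himage, ← AlgHom.map_adjoin, FreeAlgebra.adjoin_range_ι, Algebra.map_top,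
    AlgHom.range_eq_top]
  exact RingQuot.mkAlgHom_surjective A _

end MatRing

theorem stmt9 (A : Type*) [CommRing A] (i j : ℕ) (hi : 1 ≤ i) (hj : 1 ≤ j)
    (hij : i > j) (hgcd : Nat.gcd i j = 1) :
    Submodule.span A
      ({z : MatRing A i j | ∃ m < (i + j - 1) * (i - j), z = Xgen A i j ^ m} ∪
       {z : MatRing A i j | ∃ m < (i + j - 1) * (i - j), z = Xgen A i j ^ m * Ygen A i j}) = ⊤
    ∧ Module.Finite A (MatRing A i j) := by
  simpa only [adjoin_Xgen_Ygen, Algebra.top_toSubmodule, ← Module.finite_def] using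
    stmt9_general (A := A) hj hij hgcd (Xgen_pow_mul_Ygen_add A i j) (Ygen_mul_self A i j)
end

section
/- For natural numbers i,j ≥ 1, there exist 2×2 matrices X, Y over the field ℚ of rational numbers satisfying X^i·Y + Y·X^j = 1 and Y² = 0 if and only if at least one of the following holds: (a) i = j and i is not divisible by 4; (b) i and j are both odd; (c) (i,j) is congruent mod 6 to one of (1,2), (2,1), (4,5), (5,4). -/
/-!
Write `A = X ^ i` and `B = X ^ j`. If `Y ^ 2 = 0`, then `tr Y = 0`, and the polarised
Cayley–Hamilton identity reads `A * Y - Y * adj A = tr (A * Y)`. Hence `A * Y + Y * B = 1` forces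
`Y * (B + adj A) = 0`, and since `B + adj A` commutes with `B`,
`B + adj A = (A * Y + Y * B) * (B + adj A) = 0`. So `Y` can be eliminated: the equation is solvable
in `Y` if and only if `B = - adj A` and `A` is not scalar.

It remains to find the `X` with `X ^ j = - adj (X ^ i)` not scalar. Then `X ^ (i + j)` is scalar,
which is restrictive over `ℚ`: if `det X = 1`, a power of `X` is a combination of `X` and `1` whose
coefficients are Chebyshev polynomials in `tr X`, so `tr X / 2` is the cosine of a rational multiple
of `π` and Niven's theorem leaves `tr X = -1, 0, 1`. Taking determinants, `det X ^ i = det X ^ j`,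
so `det X = ± 1` unless `i = j` or `X` is nilpotent.
-/

open Matrix Polynomial.Chebyshev

/-- The scalar `2 × 2` matrices, encoded as a subalgebra so that closure under products and powers
is inherited. -/
abbrev scalarMatrices (R : Type*) [CommRing R] : Subalgebra R (Matrix (Fin 2) (Fin 2) R) := ⊥

lemma not_dvd_of_pow_notMem {M S : Type*} [Monoid M] [SetLike S M] [SubmonoidClass S M] {s : S}
    {x : M} {m n : ℕ} (hm : x ^ m ∈ s) (hn : x ^ n ∉ s) : ¬ m ∣ n := by
  rintro ⟨k, rfl⟩
  exact hn (pow_mul x m k ▸ pow_mem hm k)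

lemma ne_zero_of_pow_notMem {M S : Type*} [Monoid M] [SetLike S M] [OneMemClass S M] {s : S}
    {x : M} {n : ℕ} (hn : x ^ n ∉ s) : n ≠ 0 := by
  rintro rfl
  exact hn (pow_zero x ▸ one_mem s)

lemma one_ne_neg_one_of_module_rat (A : Type*) [Ring A] [Nontrivial A] [Module ℚ A] :
    (1 : A) ≠ -1 :=
  have := IsAddTorsionFree.of_module_rat A
  self_ne_neg.mpr one_ne_zero

section PowersInBot

variable {K A : Type*} [Field K] [Ring A] [Nontrivial A] [Algebra K A] {x y : A} {m n : ℕ}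

lemma mem_bot_of_mul_mem_bot (hx : IsUnit x) (hxK : x ∈ (⊥ : Subalgebra K A))
    (hxy : x * y ∈ (⊥ : Subalgebra K A)) : y ∈ (⊥ : Subalgebra K A) := by
  obtain ⟨c, rfl⟩ := Algebra.mem_bot.mp hxK
  have hc : c ≠ 0 := by
    rintro rfl
    simp at hx
  simpa [Algebra.smul_def, ← mul_assoc, ← map_mul, hc] using
    Subalgebra.smul_mem (⊥ : Subalgebra K A) hxy c⁻¹

lemma pow_gcd_mem_bot (hx : IsUnit x) (hm : x ^ m ∈ (⊥ : Subalgebra K A))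
    (hn : x ^ n ∈ (⊥ : Subalgebra K A)) : x ^ m.gcd n ∈ (⊥ : Subalgebra K A) := by
  induction m, n using Nat.gcd.induction with
  | H0 n => simpa using hn
  | H1 m n _ ih =>
    rw [Nat.gcd_rec]
    refine ih (mem_bot_of_mul_mem_bot (hx.pow (m * (n / m))) ?_ ?_) hm
    · rw [pow_mul]
      exact pow_mem hm _
    · rwa [← pow_add, Nat.div_add_mod]

end PowersInBot

section CommRing

variable {R : Type*} [CommRing R] {X : Matrix (Fin 2) (Fin 2) R}

lemma mem_scalarMatrices_iff :
    X ∈ scalarMatrices R ↔ X 0 1 = 0 ∧ X 1 0 = 0 ∧ X 0 0 = X 1 1 := by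
  rw [Algebra.mem_bot]
  constructor
  · rintro ⟨c, rfl⟩
    simp [algebraMap_matrix_apply]
  · rintro ⟨h01, h10, h⟩
    refine ⟨X 0 0, ?_⟩
    ext a b
    fin_cases a <;> fin_cases b <;> simp [algebraMap_matrix_apply, *]

lemma smul_one_mem_scalarMatrices (c : R) : c • 1 ∈ scalarMatrices R :=
  Subalgebra.smul_mem _ (one_mem _) c

lemma adjugate_eq_trace_smul_one_sub (X : Matrix (Fin 2) (Fin 2) R) :
    X.adjugate = X.trace • 1 - X := by
  rw [adjugate_fin_two]
  ext a b
  fin_cases a <;> fin_cases b <;> simp [trace_fin_two]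

lemma sq_eq_trace_smul_sub_det_smul_one (X : Matrix (Fin 2) (Fin 2) R) :
    X ^ 2 = X.trace • X - X.det • 1 := by
  rw [← mul_adjugate, adjugate_eq_trace_smul_one_sub, mul_sub, mul_smul_comm, mul_one, pow_two]
  abel

lemma trace_sq_fin_two (X : Matrix (Fin 2) (Fin 2) R) :
    (X ^ 2).trace = X.trace ^ 2 - 2 * X.det := by
  rw [sq_eq_trace_smul_sub_det_smul_one]
  simp [pow_two, mul_comm]

lemma pow_three_eq_smul_sub_smul_one (X : Matrix (Fin 2) (Fin 2) R) :
    X ^ 3 = (X.trace ^ 2 - X.det) • X - (X.trace * X.det) • 1 := by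
  rw [pow_succ, sq_eq_trace_smul_sub_det_smul_one, sub_mul, smul_mul_assoc, smul_mul_assoc,
    one_mul, ← pow_two, sq_eq_trace_smul_sub_det_smul_one]
  module

lemma pow_succ_eq_chebyshev (hdet : X.det = 1) (n : ℕ) :
    X ^ (n + 1) = (S R n).eval X.trace • X - (S R (n - 1)).eval X.trace • 1 := by
  induction n with
  | zero => simp
  | succ n ih =>
    rw [pow_succ, ih, sub_mul, smul_mul_assoc, smul_mul_assoc, one_mul, ← pow_two,
      sq_eq_trace_smul_sub_det_smul_one, hdet, Nat.cast_succ, S_add_one]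
    simp only [Polynomial.eval_sub, Polynomial.eval_mul, Polynomial.eval_X, add_sub_cancel_right]
    module

/-- Polarisation of the Cayley–Hamilton identity. -/
lemma mul_sub_mul_adjugate (A Y : Matrix (Fin 2) (Fin 2) R) :
    A * Y - Y * A.adjugate = (A * Y).trace • 1 - Y.trace • A.adjugate := by
  rw [adjugate_fin_two]
  ext a b
  fin_cases a <;> fin_cases b <;> simp [mul_apply, trace_fin_two, Fin.sum_univ_two] <;> ring

lemma neg_adjugate_mem_scalarMatrices_iff :
    -X.adjugate ∈ scalarMatrices R ↔ X ∈ scalarMatrices R := by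
  rw [neg_mem_iff, mem_scalarMatrices_iff, mem_scalarMatrices_iff, adjugate_fin_two]
  simp [eq_comm]

end CommRing

section Elimination

variable {R : Type*} [CommRing R] [IsReduced R] {A B X Y : Matrix (Fin 2) (Fin 2) R}

lemma sq_eq_zero_of_isNilpotent_fin_two (hX : IsNilpotent X) : X ^ 2 = 0 := by
  have hdet : X.det = 0 := by
    obtain ⟨k, hk⟩ := hX
    exact eq_zero_of_pow_eq_zero (n := k + 1) (by rw [← det_pow, pow_succ, hk, zero_mul, det_zero])
  rw [sq_eq_trace_smul_sub_det_smul_one, (isNilpotent_trace_of_isNilpotent hX).eq_zero, hdet,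
    zero_smul, zero_smul, sub_zero]

lemma eq_one_of_isNilpotent_of_pow_notMem {i : ℕ} (hX : IsNilpotent X)
    (hXi : X ^ i ∉ scalarMatrices R) : i = 1 := by
  have hi := ne_zero_of_pow_notMem hXi
  by_contra hne
  have hge : 2 ≤ i := by omega
  exact hXi (by simp [pow_eq_zero_of_le hge (sq_eq_zero_of_isNilpotent_fin_two hX)])

lemma mul_sub_mul_adjugate_of_sq_eq_zero (A : Matrix (Fin 2) (Fin 2) R) (hY : Y ^ 2 = 0) :
    A * Y - Y * A.adjugate = (A * Y).trace • 1 := by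
  rw [mul_sub_mul_adjugate, (isNilpotent_trace_of_isNilpotent ⟨2, hY⟩).eq_zero, zero_smul, sub_zero]

lemma trace_mul_eq_one_of_mul_add_mul_eq_one (h : A * Y + Y * B = 1) (hY : Y ^ 2 = 0) :
    (A * Y).trace = 1 := by
  have hYY : Y * Y = 0 := by rw [← pow_two, hY]
  have hYAY : Y * (A * Y) = Y := by
    simpa [mul_add, ← mul_assoc, hYY] using congrArg (Y * ·) h
  have htr : Y * (A * Y) = (A * Y).trace • Y := by
    simpa [mul_sub, ← mul_assoc, hYY] using
      congrArg (Y * ·) (mul_sub_mul_adjugate_of_sq_eq_zero A hY)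
  have hzero : ((A * Y).trace - 1) • Y = 0 := by rw [sub_smul, ← htr, hYAY, one_smul, sub_self]
  have hone : ((A * Y).trace - 1) • (1 : Matrix (Fin 2) (Fin 2) R) = 0 := by
    rw [← h, smul_add, ← mul_smul_comm, ← smul_mul_assoc, hzero, mul_zero, zero_mul, add_zero]
  simpa [sub_eq_zero] using congrFun₂ hone 0 0

lemma eq_neg_adjugate_of_mul_add_mul_eq_one (hAB : Commute A B) (h : A * Y + Y * B = 1)
    (hY : Y ^ 2 = 0) : B = -A.adjugate := by
  rw [eq_neg_iff_add_eq_zero]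
  have hAY := mul_sub_mul_adjugate_of_sq_eq_zero A hY
  rw [trace_mul_eq_one_of_mul_add_mul_eq_one h hY, one_smul] at hAY
  have hYN : Y * (B + A.adjugate) = 0 := by
    rw [mul_add, eq_sub_of_add_eq' h, ← hAY]
    abel
  have hcomm : Commute B (B + A.adjugate) := by
    rw [adjugate_eq_trace_smul_one_sub]
    exact (Commute.refl B).add_right (((Commute.one_right B).smul_right _).sub_right hAB.symm)
  calc B + A.adjugate = (A * Y + Y * B) * (B + A.adjugate) := by rw [h, one_mul]
    _ = A * (Y * (B + A.adjugate)) + Y * (B + A.adjugate) * B := by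
      rw [add_mul, mul_assoc, mul_assoc, mul_assoc, hcomm.eq]
    _ = 0 := by rw [hYN, mul_zero, zero_mul, add_zero]

lemma notMem_scalarMatrices_of_mul_add_mul_eq_one [Nontrivial R] (h : A * Y + Y * B = 1)
    (hY : Y ^ 2 = 0) : A ∉ scalarMatrices R := by
  intro hA
  obtain ⟨c, rfl⟩ := Algebra.mem_bot.mp hA
  have htr := trace_mul_eq_one_of_mul_add_mul_eq_one h hY
  rw [← Algebra.smul_def, trace_smul, (isNilpotent_trace_of_isNilpotent ⟨2, hY⟩).eq_zero,
    smul_zero] at htr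
  exact zero_ne_one htr

variable {K : Type*} [Field K]

lemma exists_sq_eq_zero_and_trace_mul_eq_one {A : Matrix (Fin 2) (Fin 2) K}
    (hA : A ∉ scalarMatrices K) :
    ∃ Y : Matrix (Fin 2) (Fin 2) K, Y ^ 2 = 0 ∧ (A * Y).trace = 1 := by
  suffices ∃ Y : Matrix (Fin 2) (Fin 2) K, Y ^ 2 = 0 ∧ (A * Y).trace ≠ 0 by
    obtain ⟨Y, hY, htr⟩ := this
    exact ⟨(A * Y).trace⁻¹ • Y, by rw [smul_pow, hY, smul_zero], by simp [htr]⟩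
  by_contra! h
  apply hA
  have h10 : A 1 0 = 0 := by
    simpa [trace_fin_two, mul_apply] using h !![0, 1; 0, 0] (by simp [pow_two, ← Matrix.ext_iff])
  have h01 : A 0 1 = 0 := by
    simpa [trace_fin_two, mul_apply] using h !![0, 0; 1, 0] (by simp [pow_two, ← Matrix.ext_iff])
  have hdiag : A 0 0 + -A 1 1 = 0 := by
    simpa [trace_fin_two, mul_apply, h01, h10] using
      h !![1, -1; 1, -1] (by simp [pow_two, ← Matrix.ext_iff])
  exact mem_scalarMatrices_iff.mpr ⟨h01, h10, eq_of_sub_eq_zero (by rwa [sub_eq_add_neg])⟩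

theorem exists_mul_add_mul_eq_one_iff {A B : Matrix (Fin 2) (Fin 2) K} (hAB : Commute A B) :
    (∃ Y, A * Y + Y * B = 1 ∧ Y ^ 2 = 0) ↔ A ∉ scalarMatrices K ∧ B = -A.adjugate := by
  constructor
  · rintro ⟨Y, h, hY⟩
    exact ⟨notMem_scalarMatrices_of_mul_add_mul_eq_one h hY,
      eq_neg_adjugate_of_mul_add_mul_eq_one hAB h hY⟩
  · rintro ⟨hA, rfl⟩
    obtain ⟨Y, hY, htr⟩ := exists_sq_eq_zero_and_trace_mul_eq_one hA
    refine ⟨Y, ?_, hY⟩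
    rw [mul_neg, ← sub_eq_add_neg, mul_sub_mul_adjugate_of_sq_eq_zero A hY, htr, one_smul]

end Elimination

section CrystallographicRestriction

variable {X : Matrix (Fin 2) (Fin 2) ℚ} {n : ℕ}

lemma eq_of_eval_S_eq_zero {t : ℚ} (h : (S ℚ n).eval t = 0) : t = -1 ∨ t = 0 ∨ t = 1 := by
  have hU : (U ℚ n).eval (t / 2) = 0 := by
    rw [← S_comp_two_mul_X]
    simpa [mul_div_cancel₀] using h
  have hUℝ : (U ℝ n).eval ((t / 2 : ℚ) : ℝ) = 0 := by
    simpa [hU] using (algebraMap_eval_U (R' := ℝ) (t / 2) n).symm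
  have hmem : ((t / 2 : ℚ) : ℝ) ∈ (U ℝ n).roots :=
    (Polynomial.mem_roots (U_ne_zero ℝ n (by omega))).mpr hUℝ
  rw [roots_U_real, Finset.mem_val, Finset.mem_image] at hmem
  obtain ⟨k, -, hk⟩ := hmem
  have hniven := niven ⟨((k + 1) / (n + 1) : ℚ), by push_cast; ring⟩ ⟨t / 2, hk⟩
  rw [hk] at hniven
  have hcases : t / 2 = -1 ∨ t / 2 = -1 / 2 ∨ t / 2 = 0 ∨ t / 2 = 1 / 2 ∨ t / 2 = 1 := by
    simp only [Set.mem_insert_iff, Set.mem_singleton_iff] at hniven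
    simp only [← Rat.cast_inj (α := ℝ)]
    push_cast at hniven ⊢
    exact hniven
  have hn : (n : ℚ) + 1 ≠ 0 := by positivity
  rcases hcases with h | h | h | h | h
  · exact absurd (by simpa [h] using hU) hn
  · left; linarith
  · right; left; linarith
  · right; right; linarith
  · exact absurd (by simpa [h] using hU) hn

lemma trace_eq_of_pow_mem_scalarMatrices (hdet : X.det = 1) (hX : X ∉ scalarMatrices ℚ) (hn : n ≠ 0)
    (hXn : X ^ n ∈ scalarMatrices ℚ) : X.trace = -1 ∨ X.trace = 0 ∨ X.trace = 1 := by
  obtain ⟨m, rfl⟩ := Nat.exists_eq_succ_of_ne_zero hn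
  apply eq_of_eval_S_eq_zero (n := m)
  by_contra hS
  apply hX
  rw [Nat.succ_eq_add_one, pow_succ_eq_chebyshev hdet,
    sub_eq_add_neg, add_mem_cancel_right (neg_mem (smul_one_mem_scalarMatrices _))] at hXn
  simpa [smul_smul, hS] using Subalgebra.smul_mem _ hXn ((S ℚ m).eval X.trace)⁻¹

lemma pow_twelve_mem_of_pow_mem_scalarMatrices (hdet : X.det ≠ 0) (hn : n ≠ 0)
    (hXn : X ^ n ∈ scalarMatrices ℚ) : X ^ 12 ∈ scalarMatrices ℚ := by
  by_cases hX2 : X ^ 2 ∈ scalarMatrices ℚ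
  · simpa [← pow_mul] using pow_mem hX2 6
  set Z := X.det⁻¹ • X ^ 2 with hZ
  have hXZ : X ^ 2 = X.det • Z := by rw [hZ, smul_smul, mul_inv_cancel₀ hdet, one_smul]
  have hZdet : Z.det = 1 := by simp [hZ, det_pow, hdet]
  have hZ1 : Z ∉ scalarMatrices ℚ := fun hmem => hX2 (hXZ ▸ Subalgebra.smul_mem _ hmem _)
  have hZn : Z ^ n ∈ scalarMatrices ℚ := by
    rw [hZ, smul_pow, pow_right_comm]
    exact Subalgebra.smul_mem _ (pow_mem hXn 2) _
  have hZ6 : Z ^ 6 ∈ scalarMatrices ℚ := by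
    rcases trace_eq_of_pow_mem_scalarMatrices hZdet hZ1 hn hZn with ht | ht | ht
    · rw [pow_mul Z 3 2, pow_three_eq_smul_sub_smul_one, ht, hZdet]
      simp
    · rw [pow_mul Z 2 3, sq_eq_trace_smul_sub_det_smul_one, ht, hZdet]
      simpa using pow_mem (neg_mem (one_mem (scalarMatrices ℚ))) 3
    · rw [pow_mul Z 3 2, pow_three_eq_smul_sub_smul_one, ht, hZdet]
      simp
  rw [pow_mul X 2 6, hXZ, smul_pow]
  exact Subalgebra.smul_mem _ hZ6 _

end CrystallographicRestriction

section Necessity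

section CommRing

variable {R : Type*} [CommRing R] {X : Matrix (Fin 2) (Fin 2) R} {i j : ℕ}

lemma pow_add_eq_neg_det_pow_smul_one (h : X ^ j = -(X ^ i).adjugate) :
    X ^ (i + j) = -(X.det ^ i) • 1 := by
  rw [pow_add, h, mul_neg, mul_adjugate, det_pow, neg_smul]

lemma det_pow_eq_det_pow_of_pow_eq_neg_adjugate (h : X ^ j = -(X ^ i).adjugate) :
    X.det ^ i = X.det ^ j := by
  rw [← det_pow X j, h, det_neg, det_adjugate, det_pow]
  simp

end CommRing

variable {X : Matrix (Fin 2) (Fin 2) ℚ} {i j : ℕ}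

lemma not_four_dvd_of_pow_eq_neg_adjugate (hXi : X ^ i ∉ scalarMatrices ℚ)
    (h : X ^ i = -(X ^ i).adjugate) : ¬ 4 ∣ i := by
  rintro ⟨k, rfl⟩
  have hsum := pow_add_eq_neg_det_pow_smul_one h
  have hmem : X ^ (4 * k + 4 * k) ∈ scalarMatrices ℚ :=
    hsum ▸ smul_one_mem_scalarMatrices _
  have hk := ne_zero_of_pow_notMem hXi
  rcases eq_or_ne X.det 0 with hdet | hdet
  · rw [hdet, zero_pow (by omega), neg_zero, zero_smul] at hsum
    have := eq_one_of_isNilpotent_of_pow_notMem ⟨_, hsum⟩ hXi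
    omega
  · have hunit : IsUnit X := (isUnit_iff_isUnit_det X).mpr hdet.isUnit
    have h12 := pow_mem (pow_twelve_mem_of_pow_mem_scalarMatrices hdet (by omega) hmem) k
    apply hXi
    refine mem_bot_of_mul_mem_bot (hunit.pow _) hmem ?_
    rwa [← pow_add, show 4 * k + 4 * k + 4 * k = 12 * k by ring, pow_mul]

lemma mod_six_of_pow_three_eq_neg_one (h3 : X ^ 3 = -1) (hXi : X ^ i ∉ scalarMatrices ℚ)
    (hXj : X ^ j ∉ scalarMatrices ℚ) (hsum : X ^ (i + j) = -1) :
    (i % 6 = 1 ∧ j % 6 = 2) ∨ (i % 6 = 2 ∧ j % 6 = 1) ∨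
      (i % 6 = 4 ∧ j % 6 = 5) ∨ (i % 6 = 5 ∧ j % 6 = 4) := by
  have hneg : (-1 : Matrix (Fin 2) (Fin 2) ℚ) ∈ scalarMatrices ℚ := neg_mem (one_mem _)
  have hunit : IsUnit X :=
    IsUnit.of_pow_eq_one (n := 6) (by rw [pow_mul X 3 2, h3, neg_one_sq]) (by norm_num)
  have hi : ¬ 3 ∣ i := not_dvd_of_pow_notMem (h3 ▸ hneg) hXi
  have hj : ¬ 3 ∣ j := not_dvd_of_pow_notMem (h3 ▸ hneg) hXj
  have hdvd : 3 ∣ i + j := by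
    by_contra hndvd
    have hX := pow_gcd_mem_bot hunit (h3 ▸ hneg) (hsum ▸ hneg)
    rw [(Nat.Prime.coprime_iff_not_dvd Nat.prime_three).mpr hndvd, pow_one] at hX
    exact hXi (pow_mem hX i)
  obtain ⟨l, hl⟩ := hdvd
  have hodd : Odd l := by
    by_contra heven
    rw [hl, pow_mul, h3, (Nat.not_odd_iff_even.mp heven).neg_one_pow] at hsum
    exact one_ne_neg_one_of_module_rat _ hsum
  obtain ⟨m, rfl⟩ := hodd
  omega

lemma residues_of_det_eq_one (hdet : X.det = 1) (hXi : X ^ i ∉ scalarMatrices ℚ)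
    (hXj : X ^ j ∉ scalarMatrices ℚ) (hsum : X ^ (i + j) = -1) :
    (Odd i ∧ Odd j) ∨
      (i % 6 = 1 ∧ j % 6 = 2) ∨ (i % 6 = 2 ∧ j % 6 = 1) ∨
      (i % 6 = 4 ∧ j % 6 = 5) ∨ (i % 6 = 5 ∧ j % 6 = 4) := by
  have hneg : (-1 : Matrix (Fin 2) (Fin 2) ℚ) ∈ scalarMatrices ℚ := neg_mem (one_mem _)
  have hcube := pow_three_eq_smul_sub_smul_one X
  have hX : X ∉ scalarMatrices ℚ := fun hmem => hXi (pow_mem hmem i)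
  have hij : i + j ≠ 0 := by
    have := ne_zero_of_pow_notMem hXi
    omega
  rcases trace_eq_of_pow_mem_scalarMatrices hdet hX hij (hsum ▸ hneg) with ht | ht | ht
  · have h3 : X ^ 3 = 1 := by simp [hcube, ht, hdet]
    refine absurd ?_ (one_ne_neg_one_of_module_rat (Matrix (Fin 2) (Fin 2) ℚ))
    calc 1 = (X ^ 3) ^ (i + j) := by rw [h3, one_pow]
      _ = (X ^ (i + j)) ^ 3 := pow_right_comm X 3 (i + j)
      _ = -1 := by rw [hsum, Odd.neg_one_pow (by decide)]
  · have h2 : X ^ 2 = -1 := by simp [sq_eq_trace_smul_sub_det_smul_one, ht, hdet]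
    have not_two_dvd {k : ℕ} (hk : X ^ k ∉ scalarMatrices ℚ) : ¬ 2 ∣ k :=
      not_dvd_of_pow_notMem (h2 ▸ hneg) hk
    simp only [← Nat.not_even_iff_odd, even_iff_two_dvd]
    exact .inl ⟨not_two_dvd hXi, not_two_dvd hXj⟩
  · have h3 : X ^ 3 = -1 := by simp [hcube, ht, hdet]
    exact .inr (mod_six_of_pow_three_eq_neg_one h3 hXi hXj hsum)

lemma odd_and_odd_of_det_eq_neg_one (hdet : X.det = -1) (hXi : X ^ i ∉ scalarMatrices ℚ)
    (h : X ^ j = -(X ^ i).adjugate) : Odd i ∧ Odd j := by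
  have hparity : Even i ↔ Even j := by
    have hpow := det_pow_eq_det_pow_of_pow_eq_neg_adjugate h
    rw [hdet] at hpow
    rw [← neg_one_pow_eq_one_iff_even (R := ℚ) (by norm_num), hpow,
      neg_one_pow_eq_one_iff_even (by norm_num)]
  suffices ¬ Even i by
    exact ⟨Nat.not_even_iff_odd.mp this, Nat.not_even_iff_odd.mp (hparity.not.mp this)⟩
  intro hi
  have hsum := pow_add_eq_neg_det_pow_smul_one h
  obtain ⟨k, hk⟩ := (hi.add (hparity.mp hi)).two_dvd
  have hk0 : k ≠ 0 := by
    have := ne_zero_of_pow_notMem hXi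
    omega
  have hX2 : X ^ 2 ∉ scalarMatrices ℚ := fun hmem => not_dvd_of_pow_notMem hmem hXi hi.two_dvd
  have hX2k : (X ^ 2) ^ k ∈ scalarMatrices ℚ := by
    rw [← pow_mul, ← hk, hsum]
    exact smul_one_mem_scalarMatrices _
  have htr : (X ^ 2).trace = X.trace ^ 2 + 2 := by
    rw [trace_sq_fin_two, hdet]
    ring
  have hnonneg := sq_nonneg X.trace
  rcases trace_eq_of_pow_mem_scalarMatrices (by simp [hdet]) hX2 hk0 hX2k with
    ht | ht | ht <;> linarith

lemma residues_of_pow_eq_neg_adjugate (hXi : X ^ i ∉ scalarMatrices ℚ)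
    (h : X ^ j = -(X ^ i).adjugate) :
    (i = j ∧ ¬ (4 ∣ i)) ∨ (Odd i ∧ Odd j) ∨
      (i % 6 = 1 ∧ j % 6 = 2) ∨ (i % 6 = 2 ∧ j % 6 = 1) ∨
      (i % 6 = 4 ∧ j % 6 = 5) ∨ (i % 6 = 5 ∧ j % 6 = 4) := by
  rcases eq_or_ne i j with rfl | hij
  · exact .inl ⟨rfl, not_four_dvd_of_pow_eq_neg_adjugate hXi h⟩
  right
  have hXj : X ^ j ∉ scalarMatrices ℚ := by rwa [h, neg_adjugate_mem_scalarMatrices_iff]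
  have hsum := pow_add_eq_neg_det_pow_smul_one h
  rcases eq_or_ne X.det 0 with hdet | hdet
  · have hi := ne_zero_of_pow_notMem hXi
    have hnil : IsNilpotent X := ⟨i + j, by rw [hsum, hdet, zero_pow hi, neg_zero, zero_smul]⟩
    have hi1 := eq_one_of_isNilpotent_of_pow_notMem hnil hXi
    have hj1 := eq_one_of_isNilpotent_of_pow_notMem hnil hXj
    exact absurd (hi1.trans hj1.symm) hij
  have habs : |X.det| = 1 := by
    by_contra hne
    apply hij
    apply pow_right_injective₀ (abs_pos.mpr hdet) hne
    simp only [← abs_pow, det_pow_eq_det_pow_of_pow_eq_neg_adjugate h]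
  rcases eq_or_eq_neg_of_abs_eq habs with hdet | hdet
  · exact residues_of_det_eq_one hdet hXi hXj (by simp [hsum, hdet])
  · exact .inl (odd_and_odd_of_det_eq_neg_one hdet hXi h)

end Necessity

section Sufficiency

variable {i j : ℕ}

lemma exists_pow_eq_neg_adjugate_of_odd (hi : Odd i) (hj : Odd j) :
    ∃ X : Matrix (Fin 2) (Fin 2) ℚ, X ^ i ∉ scalarMatrices ℚ ∧ X ^ j = -(X ^ i).adjugate := by
  set X : Matrix (Fin 2) (Fin 2) ℚ := !![0, 1; 1, 0] with hX
  have hX2 : X ^ 2 = 1 := by simp [hX, pow_two, one_fin_two]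
  have pow_odd {n : ℕ} (hn : Odd n) : X ^ n = X := by
    obtain ⟨k, rfl⟩ := hn
    rw [pow_succ, pow_mul, hX2, one_pow, one_mul]
  refine ⟨X, ?_, ?_⟩
  · rw [pow_odd hi, mem_scalarMatrices_iff]
    simp [hX]
  · rw [pow_odd hi, pow_odd hj]
    simp [hX]

lemma exists_pow_eq_neg_adjugate_of_mod_four_eq_two (hi : i % 4 = 2) :
    ∃ X : Matrix (Fin 2) (Fin 2) ℚ, X ^ i ∉ scalarMatrices ℚ ∧ X ^ i = -(X ^ i).adjugate := by
  -- The rotation by `π / 4` scaled by `√2`: its `i`-th power is a multiple of a quarter turn.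
  set X : Matrix (Fin 2) (Fin 2) ℚ := !![1, -1; 1, 1] with hX
  have hX2 : X ^ 2 = !![0, -2; 2, 0] := by norm_num [hX, pow_two]
  have hX4 : X ^ 4 = (-4 : ℚ) • 1 := by
    rw [pow_mul X 2 2, hX2, pow_two, one_fin_two]
    norm_num
  have hXi : X ^ i = (-4 : ℚ) ^ (i / 4) • !![0, -2; 2, 0] := by
    conv_lhs => rw [← Nat.div_add_mod i 4, hi]
    rw [pow_add, pow_mul, hX4, hX2, smul_pow, one_pow, smul_mul_assoc, one_mul]
  refine ⟨X, ?_, ?_⟩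
  · simp [hXi, mem_scalarMatrices_iff]
  · simp [hXi, adjugate_fin_two]

lemma exists_pow_eq_neg_adjugate_of_mod_six
    (hij : (i % 6 = 1 ∧ j % 6 = 2) ∨ (i % 6 = 2 ∧ j % 6 = 1) ∨
      (i % 6 = 4 ∧ j % 6 = 5) ∨ (i % 6 = 5 ∧ j % 6 = 4)) :
    ∃ X : Matrix (Fin 2) (Fin 2) ℚ, X ^ i ∉ scalarMatrices ℚ ∧ X ^ j = -(X ^ i).adjugate := by
  set X : Matrix (Fin 2) (Fin 2) ℚ := !![0, -1; 1, 1] with hX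
  have hX6 : X ^ 6 = 1 := by simp [hX, pow_succ, one_fin_two]
  refine ⟨X, ?_⟩
  rw [pow_eq_pow_mod i hX6, pow_eq_pow_mod j hX6, mem_scalarMatrices_iff]
  rcases hij with ⟨hi, hj⟩ | ⟨hi, hj⟩ | ⟨hi, hj⟩ | ⟨hi, hj⟩ <;>
    simp [hi, hj, hX, pow_succ, adjugate_fin_two]

end Sufficiency

theorem stmt19 (i j : ℕ) (hi : 1 ≤ i) (hj : 1 ≤ j) :
    (∃ X Y : Matrix (Fin 2) (Fin 2) ℚ, X ^ i * Y + Y * X ^ j = 1 ∧ Y ^ 2 = 0) ↔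
      (i = j ∧ ¬ (4 ∣ i)) ∨ (Odd i ∧ Odd j) ∨
      (i % 6 = 1 ∧ j % 6 = 2) ∨ (i % 6 = 2 ∧ j % 6 = 1) ∨
      (i % 6 = 4 ∧ j % 6 = 5) ∨ (i % 6 = 5 ∧ j % 6 = 4) := by
  have hcomm (X : Matrix (Fin 2) (Fin 2) ℚ) : Commute (X ^ i) (X ^ j) := Commute.pow_pow_self X i j
  simp only [exists_mul_add_mul_eq_one_iff (hcomm _)]
  constructor
  · rintro ⟨X, hXi, h⟩
    exact residues_of_pow_eq_neg_adjugate hXi h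
  · rintro (⟨rfl, h4⟩ | ⟨hi_odd, hj_odd⟩ | hmod)
    · rcases Nat.even_or_odd i with heven | hodd
      · rw [Nat.even_iff] at heven
        exact exists_pow_eq_neg_adjugate_of_mod_four_eq_two (by omega)
      · exact exists_pow_eq_neg_adjugate_of_odd hodd hodd
    · exact exists_pow_eq_neg_adjugate_of_odd hi_odd hj_odd
    · exact exists_pow_eq_neg_adjugate_of_mod_six hmod
end
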